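/- Let R be a self-relation on a finite set X with Dom R = X, with eventual period R^j = R^{j+p} (j, p ≥ 1), such that the graph G_R is connected (EqvGen R relates any two points of X), and such that some positive power of R is acyclic (as holds for every simple relation): there exists q ≥ 1 with R^q acyclic. Then there exists r ≥ 1 such that the number of connected components of K_{R^j} equals the number of connected components of the graph G_{R^r}: for all x, x' ∈ X, ReflTransGen E x x' holds if and only if EqvGen (R^r) x x' holds, where E is the edge relation of K_{R^j} given by E a b ↔ ∃ y, R^j a y ∧ R^j b y. -/

import Mathlib

/-- The Dowker complex `K_R` of a relation `R : X → Y → Prop`: the set of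
nonempty finite subsets `σ ⊆ X` such that there is a `y` with `R x y` for all `x ∈ σ`. -/
def dowkerK {X Y : Type*} (R : X → Y → Prop) : Set (Finset X) :=
  {σ | σ.Nonempty ∧ ∃ y, ∀ x ∈ σ, R x y}

/-- The Dowker complex `L_R` of a relation `R : X → Y → Prop`: the set of
nonempty finite subsets `τ ⊆ Y` such that there is an `x` with `R x y` for all `y ∈ τ`. -/
def dowkerL {X Y : Type*} (R : X → Y → Prop) : Set (Finset Y) :=
  {τ | τ.Nonempty ∧ ∃ x, ∀ y ∈ τ, R x y}

/-- Composition of relations: `relComp R₁ R₂` is the paper's `R₂ ∘ R₁`,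
i.e. `(R₂ ∘ R₁) x z ↔ ∃ y, R₁ x y ∧ R₂ y z`. -/
def relComp {X Y Z : Type*} (R₁ : X → Y → Prop) (R₂ : Y → Z → Prop) : X → Z → Prop :=
  fun x z => ∃ y, R₁ x y ∧ R₂ y z

/-- Powers of a self-relation: `R^0` is equality and `R^(n+1) = R ∘ R^n`. -/
def relPow {X : Type*} (R : X → X → Prop) : ℕ → X → X → Prop
  | 0 => Eq
  | n + 1 => relComp (relPow R n) R

theorem relPow_add_iff {X : Type*} (R : X → X → Prop) (m n : ℕ) (x z : X) :
    relPow R (m + n) x z ↔ ∃ y, relPow R m x y ∧ relPow R n y z := by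
  induction n generalizing z with
  | zero => simp [relPow]
  | succ n ih =>
    rw [← Nat.add_assoc]
    simp only [relPow, relComp]
    constructor
    · rintro ⟨w, hw, hz⟩
      obtain ⟨y, h1, h2⟩ := (ih w).1 hw
      exact ⟨y, h1, w, h2, hz⟩
    · rintro ⟨y, h1, w, h2, hz⟩
      exact ⟨w, (ih w).2 ⟨y, h1, h2⟩, hz⟩

theorem relPow_total {X : Type*} (R : X → X → Prop) (hDom : ∀ x, ∃ y, R x y) (n : ℕ) (x : X) :
    ∃ y, relPow R n x y := by
  induction n with
  | zero => exact ⟨x, rfl⟩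
  | succ n ih =>
    obtain ⟨y, hy⟩ := ih
    obtain ⟨z, hz⟩ := hDom y
    exact ⟨z, y, hy, hz⟩

theorem relPow_period {X : Type*} (R : X → X → Prop) (j p : ℕ)
    (hper : relPow R j = relPow R (j + p)) (k : ℕ) :
    relPow R (j + p * k) = relPow R j := by
  induction k with
  | zero => rfl
  | succ k ih =>
    have e : j + p * (k + 1) = (j + p) + p * k := by ring
    rw [e, ← ih]
    ext x z
    rw [relPow_add_iff, relPow_add_iff, hper]

theorem stmt13 {X : Type*} [Fintype X] (R : X → X → Prop)
    (hDom : ∀ x, ∃ y, R x y)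
    (j p : ℕ) (hj : 1 ≤ j) (hp : 1 ≤ p)
    (hper : relPow R j = relPow R (j + p))
    (hconn : ∀ x x' : X, Relation.EqvGen R x x')
    (hsimple : ∃ q : ℕ, 1 ≤ q ∧
      ∀ x y, ∀ m n : ℕ, 1 ≤ m → 1 ≤ n →
        relPow (relPow R q) m x y → relPow (relPow R q) n y x → x = y) :
    ∃ r : ℕ, 1 ≤ r ∧ ∀ x x' : X,
      Relation.ReflTransGen (fun a b => ∃ y, relPow R j a y ∧ relPow R j b y) x x' ↔
      Relation.EqvGen (relPow R r) x x' := by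
  -- take `r = p * j`, a multiple of the period that is at least `j`
  refine ⟨p * j, Nat.mul_pos hp hj, fun x x' => ⟨fun h => ?_, fun h => ?_⟩⟩
  · have key : ∀ a y z, relPow R j a y → relPow R (p * j - j) y z → relPow R (p * j) a z := by
      intro a y z h1 h2
      have e : p * j = j + (p * j - j) := by
        have := Nat.le_mul_of_pos_left j hp
        omega
      rw [e]
      exact (relPow_add_iff R _ _ a z).2 ⟨y, h1, h2⟩
    induction h with
    | refl => exact Relation.EqvGen.refl _
    | tail _ hbc ih =>
      obtain ⟨y, hb, hc⟩ := hbc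
      obtain ⟨z, hz⟩ := relPow_total R hDom (p * j - j) y
      exact ih.trans _ _ _ (Relation.EqvGen.trans _ z _ (.rel _ _ (key _ y z hb hz))
        (.symm _ _ (.rel _ _ (key _ y z hc hz))))
  · induction h with
    | rel a b hab =>
      obtain ⟨y, hy⟩ := relPow_total R hDom j b
      refine Relation.ReflTransGen.single ⟨y, ?_, hy⟩
      rw [← relPow_period R j p hper j, Nat.add_comm]
      exact (relPow_add_iff R _ _ a y).2 ⟨b, hab, hy⟩
    | refl a => exact Relation.ReflTransGen.refl
    | symm a b _ ih =>
      refine Relation.ReflTransGen.mono ?_ _ _ (Relation.ReflTransGen.swap _ _ ih)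
      rintro u v ⟨y, h1, h2⟩
      exact ⟨y, h2, h1⟩
    | trans a b c _ _ h1 h2 => exact h1.trans h2
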